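/- Let d, m ≥ 1, let σ : ℝ^d → ℝ^{d×m} be continuously differentiable, set D := σσᵀ/2 (pointwise), let ρ : ℝ^d → ℝ be continuously differentiable with ρ(x) > 0 for all x, and define b_rev := D∇log ρ + ∇·D. Then for all smooth compactly supported f, g : ℝ^d → ℝ, ∫ g(x)·(⟨b_rev(x), ∇f(x)⟩ + Σ_{i,j} D_{ij}(x) ∂_i∂_j f(x))·ρ(x) dx = −(1/2) ∫ ⟨σ(x)ᵀ∇f(x), σ(x)ᵀ∇g(x)⟩ ρ(x) dx. -/

import Mathlib

open MeasureTheory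

/-- The `i`-th partial derivative of `f : (ι → ℝ) → ℝ` at `x`. -/
noncomputable def pd {ι : Type*} [Fintype ι] [DecidableEq ι] (i : ι)
    (f : (ι → ℝ) → ℝ) (x : ι → ℝ) : ℝ :=
  fderiv ℝ f x (Pi.single i 1)

theorem pd_mul' {d : ℕ} (j : Fin d) {u v : (Fin d → ℝ) → ℝ} (x : Fin d → ℝ)
    (hu : DifferentiableAt ℝ u x) (hv : DifferentiableAt ℝ v x) :
    pd j (fun y => u y * v y) x = pd j u x * v x + u x * pd j v x := by
  unfold pd
  rw [fderiv_fun_mul hu hv]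
  simp
  ring

theorem pd_contDiff {d : ℕ} (j : Fin d) {u : (Fin d → ℝ) → ℝ}
    (hu : ContDiff ℝ (⊤ : ℕ∞) u) : ContDiff ℝ (⊤ : ℕ∞) (pd j u) := by
  unfold pd
  exact (hu.fderiv_right (m := ((⊤ : ℕ∞) : WithTop ℕ∞)) (by simp)).clm_apply contDiff_const

theorem pd_continuous {d : ℕ} (j : Fin d) {u : (Fin d → ℝ) → ℝ}
    (hu : ContDiff ℝ 1 u) : Continuous (pd j u) := by
  unfold pd
  exact (hu.continuous_fderiv (by simp)).clm_apply continuous_const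

theorem pd_compact {d : ℕ} (j : Fin d) {u : (Fin d → ℝ) → ℝ}
    (hu : HasCompactSupport u) : HasCompactSupport (pd j u) :=
  hu.fderiv_apply ℝ (Pi.single j 1)

theorem pd_log {d : ℕ} (j : Fin d) {u : (Fin d → ℝ) → ℝ} (x : Fin d → ℝ)
    (hu : DifferentiableAt ℝ u x) (h : 0 < u x) :
    pd j (fun y => Real.log (u y)) x * u x = pd j u x := by
  unfold pd
  rw [fderiv.log hu h.ne']
  simp
  field_simp

theorem ibp {d : ℕ} (j : Fin d) {u v : (Fin d → ℝ) → ℝ}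
    (hu : ContDiff ℝ 1 u) (hv : ContDiff ℝ 1 v) (hc : HasCompactSupport u) :
    Integrable (fun x => u x * pd j v x) ∧ Integrable (fun x => pd j u x * v x) ∧
    ∫ x, u x * pd j v x = - ∫ x, pd j u x * v x := by
  have h1 : Integrable (fun x => u x * pd j v x) :=
    (hu.continuous.mul (pd_continuous j hv)).integrable_of_hasCompactSupport hc.mul_right
  have h2 : Integrable (fun x => pd j u x * v x) :=
    ((pd_continuous j hu).mul hv.continuous).integrable_of_hasCompactSupport
      (pd_compact j hc).mul_right
  have h3 : Integrable (fun x => u x * v x) :=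
    (hu.continuous.mul hv.continuous).integrable_of_hasCompactSupport hc.mul_right
  exact ⟨h1, h2, integral_mul_fderiv_eq_neg_fderiv_mul_of_integrable h2 h1 h3
    (fun x _ => (hu.differentiable (by simp)) x) (fun x _ => (hv.differentiable (by simp)) x)⟩

/-- **Factorisation of the time-reversible part of the generator: `S = -Σ*Σ`.**
With `D = σσᵀ/2`, `ρ > 0` of class `C¹`, and `b_rev = D ∇ log ρ + ∇·D`, for all
test functions `f, g`:
`∫ g (⟨b_rev, ∇f⟩ + Σ_{ij} D_{ij} ∂_i∂_j f) ρ = -(1/2) ∫ ⟨σᵀ∇f, σᵀ∇g⟩ ρ`. -/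
theorem reversible_generator_factorisation (d m : ℕ) (hd : 1 ≤ d) (hm : 1 ≤ m)
    (σ : (Fin d → ℝ) → Matrix (Fin d) (Fin m) ℝ)
    (hσ : ∀ i k, ContDiff ℝ 1 (fun x => σ x i k))
    (D : (Fin d → ℝ) → Matrix (Fin d) (Fin d) ℝ)
    (hDdef : ∀ x i j, D x i j = (1 / 2) * ∑ k, σ x i k * σ x j k)
    (ρ : (Fin d → ℝ) → ℝ) (hρ : ContDiff ℝ 1 ρ) (hρpos : ∀ x, 0 < ρ x)
    (brev : (Fin d → ℝ) → (Fin d → ℝ))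
    (hbrev : ∀ x i, brev x i =
      (∑ j, D x i j * pd j (fun y => Real.log (ρ y)) x) +
        ∑ j, pd j (fun y => D y i j) x)
    (f g : (Fin d → ℝ) → ℝ)
    (hf : ContDiff ℝ (⊤ : ℕ∞) f) (hfc : HasCompactSupport f)
    (hg : ContDiff ℝ (⊤ : ℕ∞) g) (hgc : HasCompactSupport g) :
    ∫ x, g x * ((∑ i, brev x i * pd i f x) + ∑ i, ∑ j, D x i j * pd i (pd j f) x) * ρ x
      = -(1 / 2) * ∫ x, (∑ k, (∑ i, σ x i k * pd i f x) * (∑ i, σ x i k * pd i g x)) * ρ x := by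
  have hD : ∀ i j, ContDiff ℝ 1 (fun x => D x i j) := by
    intro i j
    simp only [hDdef]
    exact contDiff_const.mul (ContDiff.sum fun k _ => (hσ i k).mul (hσ j k))
  have hDs : ∀ x i j, D x i j = D x j i := by
    intro x i j
    simp only [hDdef, mul_comm]
  have hf1 : ∀ i, ContDiff ℝ 1 (pd i f) := fun i => (pd_contDiff i hf).of_le (by exact_mod_cast le_top)
  have hg1 : ContDiff ℝ 1 g := hg.of_le (by exact_mod_cast le_top)
  have hDρ : ∀ i j, ContDiff ℝ 1 (fun x => D x i j * ρ x) := fun i j => (hD i j).mul hρ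
  have hP : ∀ i j, ContDiff ℝ 1 (fun x => (D x i j * ρ x) * pd i f x) :=
    fun i j => (hDρ i j).mul (hf1 i)
  have key := fun i j => ibp j hg1 (hP i j) hgc
  have hL : ∀ x, g x * ((∑ i, brev x i * pd i f x) + ∑ i, ∑ j, D x i j * pd i (pd j f) x) * ρ x
      = ∑ i, ∑ j, g x * pd j (fun x => (D x i j * ρ x) * pd i f x) x := by
    intro x
    have e : ∑ i, ∑ j, D x i j * pd i (pd j f) x = ∑ i, ∑ j, D x i j * pd j (pd i f) x := by
      rw [Finset.sum_comm]
      exact Finset.sum_congr rfl fun i _ => Finset.sum_congr rfl fun j _ => by rw [hDs]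
    rw [e, ← Finset.sum_add_distrib, Finset.mul_sum, Finset.sum_mul]
    refine Finset.sum_congr rfl fun i _ => ?_
    rw [hbrev, ← Finset.sum_add_distrib, Finset.sum_mul, ← Finset.sum_add_distrib,
      Finset.mul_sum, Finset.sum_mul]
    refine Finset.sum_congr rfl fun j _ => ?_
    rw [pd_mul' j x ((hDρ i j).differentiable (by simp) x) ((hf1 i).differentiable (by simp) x),
      pd_mul' j x ((hD i j).differentiable (by simp) x) (hρ.differentiable (by simp) x),
      ← pd_log j x (hρ.differentiable (by simp) x) (hρpos x)]
    ring
  have hR : ∀ x, (∑ k, (∑ i, σ x i k * pd i f x) * (∑ i, σ x i k * pd i g x)) * ρ x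
      = 2 * ∑ i, ∑ j, pd j g x * ((D x i j * ρ x) * pd i f x) := by
    intro x
    simp only [hDdef, Finset.sum_mul_sum]
    rw [Finset.sum_comm, Finset.sum_mul, Finset.mul_sum]
    refine Finset.sum_congr rfl fun i _ => ?_
    rw [Finset.sum_comm, Finset.sum_mul, Finset.mul_sum]
    refine Finset.sum_congr rfl fun j _ => ?_
    simp only [Finset.sum_mul, Finset.mul_sum]
    refine Finset.sum_congr rfl fun k _ => ?_
    ring
  simp only [hL, hR]
  rw [integral_const_mul,
    integral_finsetSum _ fun i _ => integrable_finsetSum _ fun j _ => (key i j).1,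
    integral_finsetSum _ fun i _ => integrable_finsetSum _ fun j _ => (key i j).2.1,
    ← mul_assoc, show (-(1 / 2) * 2 : ℝ) = -1 by norm_num, neg_one_mul, ← Finset.sum_neg_distrib]
  refine Finset.sum_congr rfl fun i _ => ?_
  rw [integral_finsetSum _ fun j _ => (key i j).1,
    integral_finsetSum _ fun j _ => (key i j).2.1, ← Finset.sum_neg_distrib]
  exact Finset.sum_congr rfl fun j _ => (key i j).2.2
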